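/- arXiv:2206.12631 — 5 statements merged into one kernel-verified Lean document; each statement's English description precedes it below -/
import Mathlib

section
/- Let G be a group acting 2k-transitively on a set X with |X| ≥ 2k+1, for some positive integer k. Then the induced action of G on the set of subsets of X of cardinality k is primitive. -/
/-!
Let `s` be an invariant equivalence relation with `s A B` and `A ≠ B`. Choose `b ∈ B \ A` and, as
`|A ∪ B| ≤ 2k < |X|`, a point `c ∉ A ∪ B`. By `2k`-transitivity some group element agrees with the
transposition `(b c)` on `A ∪ B`: it fixes `A` and carries `B` to `B' = (B \ {b}) ∪ {c}`. Hence
`s A B'`, and so `s B B'`: two sets that differ by a single exchange are related. All such pairs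
form a single orbit (they are determined by `k + 1 ≤ 2k` ordered points), so `s` relates every such
pair (`related_exchange`). Any two `k`-subsets are joined by a chain of single exchanges, so `s` is
universal (`related_of_exchange`).

Tuples of distinct points are encoded as duplicate-free lists, so that appending points and passing
to tuples of length less than `2k` is easy (`exists_smul_list`).
-/


open scoped Pointwise

/-- The induced action of a group element on the `k`-element subsets of `X`. -/
noncomputable def ksubAct {G X : Type*} [Group G] [MulAction G X] (k : ℕ) (σ : G)
    (A : { A : Set X // A.ncard = k }) : { A : Set X // A.ncard = k } :=
  ⟨σ • (A : Set X), by rw [Set.ncard_smul_set]; exact A.2⟩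

/-- Duplicate-free lists of the same length at most `n` are conjugate under an `n`-transitive
action, provided that `X` has at least `n` points (so that the tuples can be completed). -/
lemma exists_smul_list {G X : Type*} [Group G] [MulAction G X] {n : ℕ}
    (htrans : ∀ f f' : Fin n ↪ X, ∃ σ : G, ∀ i, σ • f i = f' i)
    (hcard : (n : ENat) ≤ ENat.card X) (l l' : List X) (hl : l.Nodup) (hl' : l'.Nodup)
    (hlen : l.length = l'.length) (hn : l.length ≤ n) :
    ∃ σ : G, l.map (σ • ·) = l' := by
  have h1 : MulAction.IsMultiplyPretransitive G X n :=
    ⟨fun f f' => by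
      obtain ⟨σ, hσ⟩ := htrans f f'
      exact ⟨σ, by ext i; exact hσ i⟩⟩
  have h2 : MulAction.IsMultiplyPretransitive G X l.length :=
    MulAction.isMultiplyPretransitive_of_le' hn hcard
  obtain ⟨σ, hσ⟩ := h2.exists_smul_eq ⟨l.get, List.nodup_iff_injective_get.1 hl⟩
    ⟨fun i => l'.get (i.cast hlen),
      (List.nodup_iff_injective_get.1 hl').comp (Fin.cast_injective hlen)⟩
  refine ⟨σ, List.ext_get (by simpa using hlen) fun i hi hi' => ?_⟩
  have := DFunLike.congr_fun hσ ⟨i, by simpa using hi⟩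
  simpa using this

lemma exists_list_of_finite {X : Type*} {A : Set X} (hA : A.Finite) :
    ∃ l : List X, l.Nodup ∧ l.length = A.ncard ∧ ∀ x, x ∈ l ↔ x ∈ A := by
  refine ⟨hA.toFinset.toList, Finset.nodup_toList _, ?_, fun x => by simp⟩
  rw [Finset.length_toList, Set.ncard_eq_toFinset_card A hA]

lemma ncard_exchange {X : Type*} {A : Set X} (hA : A.Finite) {b c : X} (hb : b ∈ A) (hc : c ∉ A) :
    (insert c (A \ {b})).ncard = A.ncard := by
  rw [Set.ncard_insert_of_notMem (fun h => hc h.1) hA.sdiff, Set.ncard_sdiff_singleton_add_one hb hA]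

/-- Pairs of `k`-subsets differing by one exchange form a single orbit: such a pair is described by
the two exchanged points and the `k - 1` common ones, and `k + 1 ≤ 2k` as `k` is positive. -/
lemma exists_smul_exchange {G X : Type*} [Group G] [MulAction G X] {k : ℕ} (hk : 0 < k)
    (htrans : ∀ f f' : Fin (2 * k) ↪ X, ∃ σ : G, ∀ i, σ • f i = f' i)
    (hcard : ((2 * k : ℕ) : ENat) ≤ ENat.card X) {A C : Set X} (hA : A.ncard = k)
    (hC : C.ncard = k) {b c d e : X} (hb : b ∈ A) (hc : c ∉ A) (he : e ∈ C) (hd : d ∉ C) :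
    ∃ σ : G, σ • A = C ∧ σ • (insert c (A \ {b})) = insert d (C \ {e}) := by
  have fA : A.Finite := Set.finite_of_ncard_pos (by omega)
  have fC : C.Finite := Set.finite_of_ncard_pos (by omega)
  obtain ⟨l, hl, hll, hlm⟩ := exists_list_of_finite (fA.sdiff (t := {b}))
  obtain ⟨m, hm, hml, hmm⟩ := exists_list_of_finite (fC.sdiff (t := {e}))
  have h1 := Set.ncard_sdiff_singleton_add_one hb fA
  have h2 := Set.ncard_sdiff_singleton_add_one he fC
  have hbc : b ≠ c := fun h => hc (h ▸ hb)
  have hed : e ≠ d := fun h => hd (h ▸ he)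
  obtain ⟨σ, hσ⟩ := exists_smul_list htrans hcard (b :: c :: l) (e :: d :: m)
    (by simp [hl, hlm, hbc, hc]) (by simp [hm, hmm, hed, hd]) (by simp; omega) (by simp; omega)
  simp only [List.map_cons, List.cons.injEq] at hσ
  obtain ⟨hσb, hσc, hσl⟩ := hσ
  have key : σ • (A \ {b}) = C \ {e} := by
    ext x
    rw [← hmm, ← hσl, List.mem_map, Set.mem_smul_set]
    simp only [hlm]
  refine ⟨σ, ?_, ?_⟩
  · rw [← Set.insert_sdiff_self_of_mem hb, Set.smul_set_insert, key, hσb,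
      Set.insert_sdiff_self_of_mem he]
  · rw [Set.smul_set_insert, key, hσc]

/-- A nontrivial invariant equivalence relation relates all pairs that differ by one exchange. -/
lemma related_exchange {G X : Type*} [Group G] [MulAction G X] {k : ℕ} (hk : 0 < k)
    (htrans : ∀ f f' : Fin (2 * k) ↪ X, ∃ σ : G, ∀ i, σ • f i = f' i)
    (hcard : ((2 * k + 1 : ℕ) : ENat) ≤ ENat.card X)
    {s : { A : Set X // A.ncard = k } → { A : Set X // A.ncard = k } → Prop}
    (hs : Equivalence s)
    (hinv : ∀ (σ : G) A B, s A B → s (ksubAct k σ A) (ksubAct k σ B))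
    {A B : { A : Set X // A.ncard = k }} (hAB : s A B) (hne : A ≠ B)
    (C D : { A : Set X // A.ncard = k }) {d e : X} (he : e ∈ C.1) (hd : d ∉ C.1)
    (hD : D.1 = insert d (C.1 \ {e})) : s C D := by
  classical
  have hcard' : ((2 * k : ℕ) : ENat) ≤ ENat.card X :=
    le_trans (by exact_mod_cast Nat.le_succ _) hcard
  obtain ⟨A, hA⟩ := A
  obtain ⟨B, hB⟩ := B
  have fA : A.Finite := Set.finite_of_ncard_pos (by omega)
  have fB : B.Finite := Set.finite_of_ncard_pos (by omega)
  have hU : (A ∪ B).ncard ≤ 2 * k := by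
    have := Set.ncard_union_le A B
    omega
  obtain ⟨b, hbB, hbA⟩ : ∃ b ∈ B, b ∉ A := by
    by_contra! h
    exact hne (Subtype.ext (Set.eq_of_subset_of_ncard_le h (by omega) fA).symm)
  obtain ⟨c, hc⟩ : ∃ c, c ∉ A ∪ B := by
    by_contra! h
    have h3 := Set.encard_univ X
    rw [← Set.eq_univ_of_forall h, ← (fA.union fB).cast_ncard_eq] at h3
    rw [← h3] at hcard
    have : 2 * k + 1 ≤ (A ∪ B).ncard := by exact_mod_cast hcard
    omega
  have hcA : c ∉ A := fun h => hc (Or.inl h)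
  have hcB : c ∉ B := fun h => hc (Or.inr h)
  -- A group element agreeing with the transposition of `b` and `c` on `A ∪ B`.
  obtain ⟨l, hl, hll, hlm⟩ := exists_list_of_finite (fA.union fB)
  obtain ⟨σ, hσ⟩ := exists_smul_list htrans hcard' l (l.map (Equiv.swap b c)) hl
    (hl.map (Equiv.injective _)) (by simp) (by omega)
  have hσ' : ∀ x ∈ A ∪ B, σ • x = Equiv.swap b c x := fun x hx =>
    List.map_inj_left.1 hσ x ((hlm x).2 hx)
  have hσA : σ • A = A := by
    have : σ • A = id '' A := Set.image_congr fun x hx => by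
      rw [hσ' x (Or.inl hx), Equiv.swap_apply_of_ne_of_ne]
      · rfl
      · exact fun h => hbA (h ▸ hx)
      · exact fun h => hcA (h ▸ hx)
    rwa [Set.image_id] at this
  have hσB : σ • B = insert c (B \ {b}) := by
    conv_lhs => rw [← Set.insert_sdiff_self_of_mem hbB]
    rw [Set.smul_set_insert, hσ' b (Or.inr hbB), Equiv.swap_apply_left]
    congr 1
    have : σ • (B \ {b}) = id '' (B \ {b}) := Set.image_congr fun x hx => by
      rw [hσ' x (Or.inr hx.1), Equiv.swap_apply_of_ne_of_ne hx.2]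
      · rfl
      · exact fun h => hcB (h ▸ hx.1)
    rwa [Set.image_id] at this
  have h1 := hinv σ _ _ hAB
  have h2 : ksubAct k σ ⟨A, hA⟩ = ⟨A, hA⟩ := Subtype.ext hσA
  rw [h2] at h1
  -- `B` and `σ • B = (B \ {b}) ∪ {c}` are both related to `A`.
  have h3 := hs.trans (hs.symm hAB) h1
  obtain ⟨τ, hτ1, hτ2⟩ := exists_smul_exchange hk htrans hcard' hB C.2 hbB hcB he hd
  have h4 := hinv τ _ _ h3
  have h5 : ksubAct k τ ⟨B, hB⟩ = C := Subtype.ext hτ1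
  have h6 : ksubAct k τ (ksubAct k σ ⟨B, hB⟩) = D := Subtype.ext <| by
    change τ • σ • B = D.1
    rw [hσB, hτ2, hD]
  rwa [h5, h6] at h4

/-- Single exchanges connect any two `k`-subsets, by induction on the size of `C \ D`. -/
lemma related_of_exchange {X : Type*} {k : ℕ} (hk : 0 < k)
    {s : { A : Set X // A.ncard = k } → { A : Set X // A.ncard = k } → Prop}
    (hs : Equivalence s)
    (hex : ∀ (C D : { A : Set X // A.ncard = k }) (d e : X), e ∈ C.1 → d ∉ C.1 →
      D.1 = insert d (C.1 \ {e}) → s C D)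
    (C D : { A : Set X // A.ncard = k }) : s C D := by
  induction hn : (C.1 \ D.1).ncard generalizing C with
  | zero =>
    have fC : C.1.Finite := Set.finite_of_ncard_pos (by rw [C.2]; omega)
    have fD : D.1.Finite := Set.finite_of_ncard_pos (by rw [D.2]; omega)
    rw [Set.ncard_eq_zero fC.sdiff, Set.sdiff_eq_empty] at hn
    have : C = D := Subtype.ext (Set.eq_of_subset_of_ncard_le hn (by rw [C.2, D.2]) fD)
    exact this ▸ hs.refl C
  | succ n ih =>
    have fC : C.1.Finite := Set.finite_of_ncard_pos (by rw [C.2]; omega)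
    obtain ⟨c, hcC, hcD⟩ : (C.1 \ D.1).Nonempty :=
      Set.nonempty_of_ncard_ne_zero (by omega)
    obtain ⟨d, hdD, hdC⟩ : ∃ d ∈ D.1, d ∉ C.1 := by
      by_contra! h
      exact hcD (Set.eq_of_subset_of_ncard_le h (by rw [C.2, D.2]) fC ▸ hcC)
    let C' : { A : Set X // A.ncard = k } :=
      ⟨insert d (C.1 \ {c}), (ncard_exchange fC hcC hdC).trans C.2⟩
    have h1 : C'.1 \ D.1 = (C.1 \ D.1) \ {c} := by
      change insert d (C.1 \ {c}) \ D.1 = _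
      rw [Set.insert_sdiff_of_mem _ hdD, sdiff_right_comm]
    have h2 := Set.ncard_sdiff_singleton_add_one (show c ∈ C.1 \ D.1 from ⟨hcC, hcD⟩) (fC.sdiff (t := D.1))
    exact hs.trans (hex C C' d c hcC hdC rfl) (ih C' (by rw [h1]; omega))

/-- If a group `G` acts `2k`-transitively on a set `X` with
`|X| ≥ 2k + 1` (`k` a positive integer), then the induced action of `G` on the set of
`k`-element subsets of `X` is primitive: it is transitive, and every `G`-invariant
equivalence relation on the `k`-element subsets is either the relation of equality
(the partition into singletons) or the universal relation (one single block). -/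
theorem primitive_on_k_subsets_of_two_k_transitive {G X : Type*} [Group G]
    [MulAction G X] (k : ℕ) (hk : 0 < k)
    (htrans : ∀ f f' : Fin (2 * k) ↪ X, ∃ σ : G, ∀ i, σ • f i = f' i)
    (hcard : ((2 * k + 1 : ℕ) : Cardinal) ≤ Cardinal.mk X) :
    (∀ A B : { A : Set X // A.ncard = k }, ∃ σ : G, ksubAct k σ A = B) ∧
    (∀ s : { A : Set X // A.ncard = k } → { A : Set X // A.ncard = k } → Prop,
      Equivalence s → (∀ (σ : G) A B, s A B → s (ksubAct k σ A) (ksubAct k σ B)) →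
      (∀ A B, s A B → A = B) ∨ ∀ A B, s A B) := by
  have hE : ((2 * k + 1 : ℕ) : ENat) ≤ ENat.card X := by
    have := Cardinal.toENat.monotone' hcard
    simpa [ENat.card] using this
  have hE' : ((2 * k : ℕ) : ENat) ≤ ENat.card X :=
    le_trans (by exact_mod_cast Nat.le_succ _) hE
  refine ⟨fun A B => ?_, fun s hs hinv => ?_⟩
  · have fA : A.1.Finite := Set.finite_of_ncard_pos (by rw [A.2]; omega)
    have fB : B.1.Finite := Set.finite_of_ncard_pos (by rw [B.2]; omega)
    obtain ⟨l, hl, hll, hlm⟩ := exists_list_of_finite fA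
    obtain ⟨m, hm, hml, hmm⟩ := exists_list_of_finite fB
    obtain ⟨σ, hσ⟩ := exists_smul_list htrans hE' l m hl hm
      (by rw [hll, hml, A.2, B.2]) (by rw [hll, A.2]; omega)
    refine ⟨σ, Subtype.ext ?_⟩
    change σ • A.1 = B.1
    ext x
    rw [← hmm, ← hσ, List.mem_map, Set.mem_smul_set]
    simp only [hlm]
  · by_cases h : ∀ A B, s A B → A = B
    · exact Or.inl h
    · push Not at h
      obtain ⟨A, B, hAB, hne⟩ := h
      exact Or.inr (related_of_exchange hk hs fun C D d e he hd hD =>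
        related_exchange hk htrans hE hs hinv hAB hne C D he hd hD)
end

section
/- Let D be a nonempty finite subset of Cantor space 𝔠 whose elements all belong to the same tail class. Then the setwise stabilizer Stab_V(D) = {g ∈ V : Dg = D} is a maximal subgroup of Thompson's group V. -/
/-!
Let `X` be the tail class containing `D`. It is infinite, it is invariant under `V`, and for
`x, y ∈ X` and a finite set `F` avoiding both points, exchanging two small cones around `x` and `y`
gives an element of `V` that swaps `x` and `y` and fixes `F` pointwise (`exists_point_swap`). Maximality
uses only these three facts: it is the primitivity of a highly transitive group acting on the
subsets of `X` of a fixed finite size.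

Let `Stab(D) ⊊ H ≤ V` and choose `h ∈ H` with `hD ≠ D`. Pick `y ∈ hD \ D` and `z ∈ X` outside
`D ∪ hD`. A swap `t` of `y` and `z` that fixes the rest of `D ∪ hD` stabilizes `D`, hence lies in
`H`, and the conjugate `h⁻¹ t h ∈ H` replaces exactly one point `a` of `D` by a point `b ∉ D`
(`exists_exchange`). Moving `(a, b)` to an arbitrary pair `(x, y)` with `x ∈ D`, `y ∈ X \ D` by an
element of `Stab(D)` shows that `H` contains every element of `V` replacing `x` by `y` in `D`
(`exchange_mem`). Finally, any `g ∈ V` is brought into `Stab(D)` by finitely many such exchanges,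
each of which reduces `|gD \ D|` by one (`mem_of_exchange`), so `H = V`.

Prefix substitution maps are handled through a criterion avoiding partitions: `g ∈ V` iff
there is `N` such that `g` acts as a prefix substitution on the cone of every address of length at
least `N` (`isPrefixSubst_iff`).
-/

/-- Addresses: finite words over the alphabet `{0,1}` (`Bool`). -/
abbrev Addr : Type := List Bool

/-- Cantor space: infinite words over the alphabet `{0,1}`. -/
abbrev Cantor : Type := ℕ → Bool

/-- Prepend the finite word `α` to the infinite word `w`. -/
def wcat (α : Addr) (w : Cantor) : Cantor := fun n =>
  if h : n < α.length then α.get ⟨n, h⟩ else w (n - α.length)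

/-- The cone of the address `α`: the set of infinite words having `α` as a prefix. -/
def cone (α : Addr) : Set Cantor := Set.range (wcat α)

/-- `g` is a prefix substitution map: there are partitions of Cantor space into cones
`(A i)𝔠` and `(B i)𝔠` such that `g` maps `(A i) w` to `(B i) w`. -/
def IsPrefixSubst (g : Equiv.Perm Cantor) : Prop :=
  ∃ (n : ℕ) (A B : Fin n → Addr),
    (∀ i j, i ≠ j → Disjoint (cone (A i)) (cone (A j))) ∧
    (⋃ i, cone (A i)) = Set.univ ∧
    (∀ i j, i ≠ j → Disjoint (cone (B i)) (cone (B j))) ∧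
    (⋃ i, cone (B i)) = Set.univ ∧
    (∀ i w, g (wcat (A i) w) = wcat (B i) w)

/-- Thompson's group `V`, as the set of prefix substitution maps inside `Equiv.Perm Cantor`. -/
def VSet : Set (Equiv.Perm Cantor) := { g | IsPrefixSubst g }

/-- `α ^ g = β` : `g` maps the cone of `α` onto the cone of `β` by the prefix
substitution `α ↦ β`. -/
def actsOn (g : Equiv.Perm Cantor) (α β : Addr) : Prop :=
  ∀ w, g (wcat α w) = wcat β w

/-- A subset of `Equiv.Perm Cantor` that is closed under the group operations. -/
def IsSubgroupSet (M : Set (Equiv.Perm Cantor)) : Prop :=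
  (1 : Equiv.Perm Cantor) ∈ M ∧ (∀ g ∈ M, ∀ h ∈ M, g * h ∈ M) ∧ ∀ g ∈ M, g⁻¹ ∈ M

/-- `M` is a maximal subgroup of Thompson's group `V`. -/
def IsMaximalSubgroupOfV (M : Set (Equiv.Perm Cantor)) : Prop :=
  IsSubgroupSet M ∧ M ⊆ VSet ∧ M ≠ VSet ∧
    ∀ H : Set (Equiv.Perm Cantor),
      IsSubgroupSet H → M ⊆ H → H ⊆ VSet → H = M ∨ H = VSet

/-- `u` and `v` lie in the same tail class. -/
def TailEq (u v : Cantor) : Prop :=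
  ∃ (α β : Addr) (w : Cantor), u = wcat α w ∧ v = wcat β w

/-- A point of Cantor space is rational if it is eventually periodic. -/
def EventuallyPeriodic (u : Cantor) : Prop :=
  ∃ k p : ℕ, 0 < p ∧ ∀ n : ℕ, k ≤ n → u (n + p) = u n

/-- The setwise stabilizer in Thompson's group `V` of a subset `D` of Cantor space. -/
def setStab (D : Set Cantor) : Set (Equiv.Perm Cantor) :=
  { g | IsPrefixSubst g ∧ (fun w => g w) '' D = D }

/-! ### Words and cones -/

/-- The prefix of length `n` of the infinite word `x`. -/
def pre (x : Cantor) (n : ℕ) : Addr := List.ofFn (fun i : Fin n => x i)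

/-- The infinite word `x` with its first `n` letters deleted. -/
def tailFrom (n : ℕ) (x : Cantor) : Cantor := fun k => x (n + k)

lemma pre_length (x : Cantor) (n : ℕ) : (pre x n).length = n := by simp [pre]

lemma wcat_pre (x : Cantor) (n : ℕ) : wcat (pre x n) (tailFrom n x) = x := by
  funext k
  by_cases h : k < n
  · simp [wcat, pre, h]
  · have : n + (k - n) = k := by omega
    simp [wcat, pre, tailFrom, h, this]

lemma tailFrom_wcat (α : Addr) (w : Cantor) : tailFrom α.length (wcat α w) = w := by
  funext k
  simp [tailFrom, wcat]

lemma wcat_apply_of_lt (α : Addr) (v w : Cantor) {i : ℕ} (h : i < α.length) :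
    wcat α v i = wcat α w i := by
  simp [wcat, h]

lemma wcat_append (α β : Addr) (w : Cantor) : wcat (α ++ β) w = wcat α (wcat β w) := by
  funext k
  by_cases h : k < α.length
  · have h' : k < α.length + β.length := by omega
    simp [wcat, h, h']
  · by_cases h2 : k < α.length + β.length
    · have h3 : k - α.length < β.length := by omega
      simp [wcat, h, h2, h3, List.getElem_append]
    · have h3 : ¬ k - α.length < β.length := by omega
      have h4 : k - (α.length + β.length) = k - α.length - β.length := by omega
      simp [wcat, h, h2, h3, h4]

lemma exists_append_of_wcat_eq {α α' : Addr} {v w : Cantor} (hl : α.length ≤ α'.length)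
    (h : wcat α v = wcat α' w) : ∃ γ, α' = α ++ γ := by
  have : α = α'.take α.length := by
    apply List.ext_getElem
    · simp [hl]
    · intro i h1 h2
      have h3 := congrFun h i
      have h4 : i < α'.length := by omega
      simpa [wcat, h1, h4] using h3
  exact ⟨α'.drop α.length, by rw [this]; simp [hl]⟩

/-! ### Prefix substitution maps -/

lemma isPrefixSubst_iff (g : Equiv.Perm Cantor) :
    IsPrefixSubst g ↔ ∃ N : ℕ, ∀ α : Addr, N ≤ α.length → ∃ β, actsOn g α β := by
  constructor
  · rintro ⟨n, A, B, -, hA, -, -, hg⟩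
    refine ⟨Finset.univ.sup (fun i => (A i).length), fun α hα => ?_⟩
    have h0 : wcat α (fun _ => false) ∈ ⋃ i, cone (A i) := by rw [hA]; trivial
    obtain ⟨i, v, hv⟩ := Set.mem_iUnion.1 h0
    have hi : (A i).length ≤ α.length :=
      (Finset.le_sup (f := fun i => (A i).length) (Finset.mem_univ i)).trans hα
    obtain ⟨γ, rfl⟩ := exists_append_of_wcat_eq hi hv
    exact ⟨B i ++ γ, fun w => by rw [wcat_append, wcat_append, hg]⟩
  · rintro ⟨N, hN⟩
    -- The domain partition consists of all words of length `N`; the range partition is its image.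
    let e := (Fintype.equivFin (Fin N → Bool)).symm
    have hlen : ∀ i, N ≤ (List.ofFn (e i)).length := fun i => by simp
    choose B hB using fun i => hN (List.ofFn (e i)) (hlen i)
    have hdisj : ∀ i j u v, wcat (List.ofFn (e i)) u = wcat (List.ofFn (e j)) v → i = j := by
      intro i j u v h
      apply e.injective
      funext k
      simpa [wcat] using congrFun h k
    have hcov : ∀ x, ∃ i v, wcat (List.ofFn (e i)) v = x := fun x =>
      ⟨e.symm (fun k => x k), tailFrom N x, by simpa [pre] using wcat_pre x N⟩
    refine ⟨_, fun i => List.ofFn (e i), B, ?_, ?_, ?_, ?_, hB⟩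
    · intro i j hij
      rw [Set.disjoint_left]
      rintro _ ⟨u, rfl⟩ ⟨v, hv⟩
      exact hij (hdisj i j u v hv.symm)
    · refine Set.eq_univ_of_forall fun x => Set.mem_iUnion.2 ?_
      exact hcov x
    · intro i j hij
      rw [Set.disjoint_left]
      rintro _ ⟨u, rfl⟩ ⟨v, hv⟩
      rw [← hB, ← hB] at hv
      exact hij (hdisj i j u v (g.injective hv.symm))
    · refine Set.eq_univ_of_forall fun x => Set.mem_iUnion.2 ?_
      obtain ⟨i, v, hv⟩ := hcov (g⁻¹ x)
      refine ⟨i, v, ?_⟩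
      rw [← hB, hv]
      simp

lemma isSubgroupSet_VSet : IsSubgroupSet VSet := by
  refine ⟨?_, ?_, ?_⟩
  · exact (isPrefixSubst_iff 1).2 ⟨0, fun α _ => ⟨α, fun w => rfl⟩⟩
  · intro g hg h hh
    obtain ⟨N, hN⟩ := (isPrefixSubst_iff g).1 hg
    obtain ⟨M, hM⟩ := (isPrefixSubst_iff h).1 hh
    refine (isPrefixSubst_iff _).2 ⟨M + N, fun α hα => ?_⟩
    -- `h` rewrites the first `M` letters; the remaining `N` or more letters survive for `g`.
    obtain ⟨β, hβ⟩ := hM (α.take M) (by rw [List.length_take]; omega)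
    obtain ⟨γ, hγ⟩ := hN (β ++ α.drop M) (by rw [List.length_append, List.length_drop]; omega)
    refine ⟨γ, fun w => ?_⟩
    rw [← hγ, wcat_append, ← hβ, ← wcat_append, List.take_append_drop]
    rfl
  · rintro g ⟨n, A, B, h1, h2, h3, h4, h5⟩
    refine ⟨n, B, A, h3, h4, h1, h2, fun i w => ?_⟩
    rw [← h5]
    simp

/-- The map exchanging the cones of `α` and `β`, meaningful when these are disjoint. -/
noncomputable def swapFun (α β : Addr) (x : Cantor) : Cantor :=
  open Classical in
  if x ∈ cone α then wcat β (tailFrom α.length x)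
  else if x ∈ cone β then wcat α (tailFrom β.length x) else x

lemma exists_cone_swap {α β : Addr} (hd : Disjoint (cone α) (cone β)) :
    ∃ t ∈ VSet, actsOn t α β ∧ actsOn t β α ∧ ∀ x, x ∉ cone α → x ∉ cone β → t x = x := by
  have h1 : ∀ w, swapFun α β (wcat α w) = wcat β w := fun w => by
    have : wcat α w ∈ cone α := ⟨w, rfl⟩
    simp [swapFun, this, tailFrom_wcat]
  have h2 : ∀ w, swapFun α β (wcat β w) = wcat α w := fun w => by
    have hb : wcat β w ∈ cone β := ⟨w, rfl⟩
    have ha : wcat β w ∉ cone α := fun h => Set.disjoint_left.1 hd h hb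
    simp [swapFun, ha, hb, tailFrom_wcat]
  have h3 : ∀ x, x ∉ cone α → x ∉ cone β → swapFun α β x = x := fun x ha hb => by
    simp [swapFun, ha, hb]
  have hinv : Function.Involutive (swapFun α β) := by
    intro x
    by_cases ha : x ∈ cone α
    · obtain ⟨w, rfl⟩ := ha
      rw [h1, h2]
    · by_cases hb : x ∈ cone β
      · obtain ⟨w, rfl⟩ := hb
        rw [h2, h1]
      · rw [h3 x ha hb, h3 x ha hb]
  refine ⟨hinv.toPerm, ?_, h1, h2, h3⟩
  refine (isPrefixSubst_iff _).2 ⟨max α.length β.length, fun δ hδ => ?_⟩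
  have hδa : α.length ≤ δ.length := (le_max_left _ _).trans hδ
  have hδb : β.length ≤ δ.length := (le_max_right _ _).trans hδ
  by_cases ha : ∃ γ, δ = α ++ γ
  · obtain ⟨γ, rfl⟩ := ha
    exact ⟨β ++ γ, fun w => by rw [wcat_append, wcat_append]; exact h1 _⟩
  · by_cases hb : ∃ γ, δ = β ++ γ
    · obtain ⟨γ, rfl⟩ := hb
      exact ⟨α ++ γ, fun w => by rw [wcat_append, wcat_append]; exact h2 _⟩
    · refine ⟨δ, fun w => h3 _ ?_ ?_⟩
      · rintro ⟨v, hv⟩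
        exact ha (exists_append_of_wcat_eq hδa hv)
      · rintro ⟨v, hv⟩
        exact hb (exists_append_of_wcat_eq hδb hv)

/-! ### Tail classes -/

lemma tailEq_iff (u v : Cantor) : TailEq u v ↔ ∃ m n, ∀ k, u (m + k) = v (n + k) := by
  constructor
  · rintro ⟨α, β, w, rfl, rfl⟩
    refine ⟨α.length, β.length, fun k => ?_⟩
    simp [wcat]
  · rintro ⟨m, n, h⟩
    refine ⟨pre u m, pre v n, tailFrom m u, (wcat_pre u m).symm, ?_⟩
    have : tailFrom m u = tailFrom n v := funext h
    rw [this, wcat_pre]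

lemma TailEq.symm {u v : Cantor} (h : TailEq u v) : TailEq v u := by
  obtain ⟨α, β, w, h1, h2⟩ := h
  exact ⟨β, α, w, h2, h1⟩

lemma TailEq.trans {u v w : Cantor} (h : TailEq u v) (h' : TailEq v w) : TailEq u w := by
  obtain ⟨m, n, h⟩ := (tailEq_iff u v).1 h
  obtain ⟨m', n', h'⟩ := (tailEq_iff v w).1 h'
  refine (tailEq_iff u w).2 ⟨m + m', n' + n, fun k => ?_⟩
  rw [add_assoc, h, add_assoc, ← h']
  congr 1
  omega

lemma tailEq_apply {g : Equiv.Perm Cantor} (hg : g ∈ VSet) (x : Cantor) : TailEq (g x) x := by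
  obtain ⟨N, hN⟩ := (isPrefixSubst_iff g).1 hg
  obtain ⟨β, hβ⟩ := hN (pre x N) (pre_length x N).ge
  refine ⟨β, pre x N, tailFrom N x, ?_, (wcat_pre x N).symm⟩
  rw [← hβ, wcat_pre]

lemma infinite_tailClass (d : Cantor) : {u | TailEq u d}.Infinite := by
  -- The words `1ⁿ0d` are pairwise distinct members of the class.
  refine Set.infinite_of_injective_forall_mem
    (f := fun n => wcat (List.replicate n true ++ [false]) d) ?_ ?_
  · have key : ∀ m n, m < n → wcat (List.replicate m true ++ [false]) d ≠
        wcat (List.replicate n true ++ [false]) d := by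
      intro m n hmn h
      have := congrFun h m
      have h1 : m < n + 1 := by omega
      simp [wcat, hmn, h1] at this
    intro m n h
    rcases lt_trichotomy m n with hl | hl | hl
    · exact (key m n hl h).elim
    · exact hl
    · exact (key n m hl h.symm).elim
  · intro n
    exact ⟨_, [], d, rfl, by funext k; simp [wcat]⟩

/-- Points of one tail class are swapped by an element of `V` fixing a prescribed finite set. -/
lemma exists_point_swap {x y : Cantor} (h : TailEq x y) {F : Set Cantor} (hF : F.Finite)
    (hx : x ∉ F) (hy : y ∉ F) :
    ∃ t ∈ VSet, t x = y ∧ t y = x ∧ ∀ f ∈ F, t f = f := by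
  by_cases hxy : x = y
  · subst hxy
    exact ⟨1, isSubgroupSet_VSet.1, rfl, rfl, fun _ _ => rfl⟩
  -- The prefixes of length `N` separate `x` from `y` and both of them from `F`.
  have sep : ∀ u v : Cantor, u ≠ v → ∀ᶠ N : ℕ in Filter.atTop, ∃ i < N, u i ≠ v i := by
    intro u v huv
    obtain ⟨i, hi⟩ := Function.ne_iff.1 huv
    filter_upwards [Filter.eventually_gt_atTop i] with N hN
    exact ⟨i, hN, hi⟩
  have hFx := (Filter.eventually_all_finite hF).2
    fun f hf => sep f x (fun e => hx (e ▸ hf))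
  have hFy := (Filter.eventually_all_finite hF).2
    fun f hf => sep f y (fun e => hy (e ▸ hf))
  obtain ⟨N, hN1, hN2, i, hiN, hi⟩ := (hFx.and (hFy.and (sep x y hxy))).exists
  obtain ⟨m, n, hmn⟩ := (tailEq_iff x y).1 h
  have agree : ∀ (u v : Cantor) (m j : ℕ), u ∈ cone (pre v (m + N)) → j < N → u j = v j := by
    rintro _ v m j ⟨w, rfl⟩ hj
    rw [wcat_apply_of_lt _ w (tailFrom (m + N) v) (by rw [pre_length]; omega), wcat_pre]
  have hd : Disjoint (cone (pre x (m + N))) (cone (pre y (n + N))) := by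
    rw [Set.disjoint_left]
    intro u hu hv
    exact hi ((agree u x m i hu hiN).symm.trans (agree u y n i hv hiN))
  obtain ⟨t, htV, h1, h2, h3⟩ := exists_cone_swap hd
  have htail : tailFrom (m + N) x = tailFrom (n + N) y := by
    funext k
    have := hmn (N + k)
    simpa [tailFrom, add_assoc] using this
  refine ⟨t, htV, ?_, ?_, fun f hf => h3 f ?_ ?_⟩
  · have := h1 (tailFrom (m + N) x)
    rwa [wcat_pre, htail, wcat_pre] at this
  · have := h2 (tailFrom (n + N) y)
    rwa [wcat_pre, ← htail, wcat_pre] at this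
  · intro hc
    obtain ⟨j, hj, hne⟩ := hN1 f hf
    exact hne (agree f x m j hc hj)
  · intro hc
    obtain ⟨j, hj, hne⟩ := hN2 f hf
    exact hne (agree f y n j hc hj)

/-! ### Setwise stabilizers and exchanges -/

lemma isSubgroupSet_setStab (D : Set Cantor) : IsSubgroupSet (setStab D) := by
  obtain ⟨h1, h2, h3⟩ := isSubgroupSet_VSet
  refine ⟨⟨h1, by simp⟩, ?_, ?_⟩
  · rintro g ⟨hg, hgD⟩ h ⟨hh, hhD⟩
    refine ⟨h2 g hg h hh, ?_⟩
    conv_rhs => rw [← hgD, ← hhD, Set.image_image]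
    rfl
  · rintro g ⟨hg, hgD⟩
    refine ⟨h3 g hg, ?_⟩
    conv_lhs => rw [← hgD, Set.image_image]
    simp

/-- An element of `V` that has the same effect on `D` as an element of `H` is in `H`. -/
lemma mem_of_image_eq {D : Set Cantor} {H : Set (Equiv.Perm Cantor)} (hH : IsSubgroupSet H)
    (hS : setStab D ⊆ H) (hHV : H ⊆ VSet) {g k : Equiv.Perm Cantor} (hg : g ∈ VSet) (hk : k ∈ H)
    (h : g '' D = k '' D) : g ∈ H := by
  have : k⁻¹ * g ∈ setStab D := by
    refine ⟨isSubgroupSet_VSet.2.1 _ (isSubgroupSet_VSet.2.2 _ (hHV hk)) _ hg, ?_⟩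
    have : (fun w => (k⁻¹ * g) w) '' D = ⇑k⁻¹ '' (g '' D) := by rw [Set.image_image]; rfl
    rw [this, h, Set.image_image]
    simp
  have h2 := hH.2.1 _ hk _ (hS this)
  rwa [mul_inv_cancel_left] at h2

lemma image_exchange {D : Set Cantor} {a b : Cantor} {k : Equiv.Perm Cantor} (ha : a ∈ D)
    (h1 : k a = b) (h2 : ∀ d ∈ D, d ≠ a → k d = d) : k '' D = insert b (D \ {a}) := by
  have hD : D = insert a (D \ {a}) := by simp [Set.insert_eq_of_mem ha]
  conv_lhs => rw [hD, Set.image_insert_eq, h1]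
  congr 1
  refine (Set.image_congr (g := id) ?_).trans (Set.image_id _)
  rintro d ⟨hd, hda⟩
  exact h2 d hd hda

/-- A subgroup properly containing the stabilizer of `D` has an element moving exactly one point
of `D`, to a point outside `D`: the conjugate of a swap in the stabilizer by any `h` with
`hD ≠ D`. -/
lemma exists_exchange {D : Set Cantor} (hfin : D.Finite) {d : Cantor}
    (hD : ∀ u ∈ D, TailEq u d) {H : Set (Equiv.Perm Cantor)} (hH : IsSubgroupSet H)
    (hS : setStab D ⊆ H) (hHV : H ⊆ VSet) (hne : H ≠ setStab D) :
    ∃ k ∈ H, ∃ a ∈ D, ∃ b ∉ D, TailEq b d ∧ k '' D = insert b (D \ {a}) := by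
  obtain ⟨h, hh, hhS⟩ : ∃ h ∈ H, h ∉ setStab D := by
    by_contra! hc
    exact hne (Set.Subset.antisymm hc hS)
  obtain ⟨a, ha, haD⟩ : ∃ a ∈ D, h a ∉ D := by
    by_contra! hc
    refine hhS ⟨hHV hh, Set.eq_of_subset_of_ncard_le (Set.image_subset_iff.2 hc) ?_ hfin⟩
    rw [Set.ncard_image_of_injective _ h.injective]
  have hfin2 : (D ∪ h '' D).Finite := hfin.union (hfin.image _)
  obtain ⟨z, hz, hzD⟩ := (infinite_tailClass d).exists_notMem_finite hfin2
  have hz : TailEq z d := hz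
  have haz : TailEq (h a) z := ((tailEq_apply (hHV hh) a).trans (hD a ha)).trans hz.symm
  obtain ⟨t, htV, ht1, -, ht3⟩ := exists_point_swap haz (F := (D ∪ h '' D) \ {h a})
    (hfin2.subset Set.sdiff_subset) (by simp) (fun hc => hzD hc.1)
  have htS : t ∈ setStab D := by
    refine ⟨htV, (Set.image_congr (g := id) ?_).trans (Set.image_id _)⟩
    intro u hu
    exact ht3 u ⟨Or.inl hu, fun e => haD (e ▸ hu)⟩
  have hinv := hH.2.2 _ hh
  refine ⟨h⁻¹ * t * h, hH.2.1 _ (hH.2.1 _ hinv _ (hS htS)) _ hh, a, ha, h⁻¹ z, ?_, ?_, ?_⟩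
  · intro hc
    exact hzD (Or.inr ⟨_, hc, by simp⟩)
  · exact (tailEq_apply (hHV hinv) z).trans hz
  · refine image_exchange ha (by simp [ht1]) fun u hu hua => ?_
    have : t (h u) = h u := ht3 _ ⟨Or.inr ⟨u, hu, rfl⟩, fun e => hua (h.injective e)⟩
    simp [this]

/-- If `H` contains one exchange of a point of `D` for a point outside `D`, then it contains all
of them, because the stabilizer of `D` acts transitively on such pairs of points. -/
lemma exchange_mem {D : Set Cantor} (hfin : D.Finite) {d : Cantor}
    (hD : ∀ u ∈ D, TailEq u d) {H : Set (Equiv.Perm Cantor)} (hH : IsSubgroupSet H)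
    (hS : setStab D ⊆ H) (hHV : H ⊆ VSet) {k : Equiv.Perm Cantor} (hk : k ∈ H) {a b : Cantor}
    (ha : a ∈ D) (hb : b ∉ D) (hbd : TailEq b d) (hkD : k '' D = insert b (D \ {a}))
    {x y : Cantor} (hx : x ∈ D) (hy : y ∉ D) (hyd : TailEq y d) {s : Equiv.Perm Cantor}
    (hs : s ∈ VSet) (hsD : s '' D = insert y (D \ {x})) : s ∈ H := by
  obtain ⟨p, hpV, hp1, hp2, hp3⟩ := exists_point_swap ((hD a ha).trans (hD x hx).symm)
    (F := insert b (D \ {a, x})) ((hfin.subset Set.sdiff_subset).insert b)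
    (by
      rintro (e | e)
      · exact hb (e ▸ ha)
      · exact e.2 (Or.inl rfl))
    (by
      rintro (e | e)
      · exact hb (e ▸ hx)
      · exact e.2 (Or.inr rfl))
  obtain ⟨q, hqV, hq1, -, hq3⟩ := exists_point_swap (hbd.trans hyd.symm) hfin hb hy
  have hpD : p '' D = D := by
    refine Set.eq_of_subset_of_ncard_le (Set.image_subset_iff.2 fun u hu => ?_)
      (Set.ncard_image_of_injective _ p.injective).ge hfin
    change p u ∈ D
    by_cases hua : u = a
    · rw [hua, hp1]
      exact hx
    · by_cases hux : u = x
      · rw [hux, hp2]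
        exact ha
      · rw [hp3 u (Or.inr ⟨hu, by simp [hua, hux]⟩)]
        exact hu
  have hqD : q '' D = D := (Set.image_congr (g := id) hq3).trans (Set.image_id _)
  have hpq : (q * p) '' (insert b (D \ {a})) = insert y (D \ {x}) := by
    have hq' : q x = x := hq3 x hx
    have hpb : p b = b := hp3 b (Or.inl rfl)
    have e : ⇑(q * p) = q ∘ p := rfl
    rw [e, Set.image_comp, Set.image_insert_eq, Set.image_insert_eq, Set.image_sdiff p.injective,
      Set.image_sdiff q.injective, hpD, hqD, Set.image_singleton, Set.image_singleton, hp1, hq',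
      hpb, hq1]
  have hmem : q * p * k ∈ H :=
    hH.2.1 _ (hH.2.1 _ (hS ⟨hqV, hqD⟩) _ (hS ⟨hpV, hpD⟩)) _ hk
  refine mem_of_image_eq hH hS hHV hs hmem ?_
  rw [hsD, ← hpq, ← hkD, Set.image_image]
  rfl

/-- A subgroup containing the stabilizer of `D` and all exchanges is `V`: exchanges bring `gD`
back to `D` one point at a time. -/
lemma mem_of_exchange {D : Set Cantor} (hfin : D.Finite) {d : Cantor}
    (hD : ∀ u ∈ D, TailEq u d) {H : Set (Equiv.Perm Cantor)} (hH : IsSubgroupSet H)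
    (hS : setStab D ⊆ H)
    (hex : ∀ x ∈ D, ∀ y ∉ D, TailEq y d → ∀ s ∈ VSet, s '' D = insert y (D \ {x}) → s ∈ H)
    (n : ℕ) : ∀ g ∈ VSet, (g '' D \ D).ncard = n → g ∈ H := by
  induction n with
  | zero =>
    intro g hg hn
    have hsub : g '' D ⊆ D := by
      rw [Set.ncard_eq_zero ((hfin.image g).subset Set.sdiff_subset)] at hn
      exact Set.sdiff_eq_empty.1 hn
    exact hS ⟨hg, Set.eq_of_subset_of_ncard_le hsub
      (Set.ncard_image_of_injective _ g.injective).ge hfin⟩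
  | succ n ih =>
    intro g hg hn
    have hgfin : (g '' D).Finite := hfin.image g
    obtain ⟨y, hyg, hyD⟩ : (g '' D \ D).Nonempty := by
      rw [← Set.ncard_pos (hgfin.subset Set.sdiff_subset)]
      omega
    obtain ⟨x, hxD, hxg⟩ : (D \ g '' D).Nonempty := by
      by_contra hc
      have hsub : D ⊆ g '' D := Set.sdiff_eq_empty.1 (Set.not_nonempty_iff_eq_empty.1 hc)
      have := Set.eq_of_subset_of_ncard_le hsub
        (Set.ncard_image_of_injective _ g.injective).le hgfin
      exact hyD (this ▸ hyg)
    have hyd : TailEq y d := by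
      obtain ⟨u, hu, rfl⟩ := hyg
      exact (tailEq_apply hg u).trans (hD u hu)
    obtain ⟨s, hsV, hs1, hs2, hs3⟩ := exists_point_swap ((hD x hxD).trans hyd.symm)
      (F := (D ∪ g '' D) \ {x, y}) ((hfin.union hgfin).subset Set.sdiff_subset)
      (by simp) (by simp)
    have hsD : s '' D = insert y (D \ {x}) := image_exchange hxD hs1 fun u hu hux =>
      hs3 u ⟨Or.inl hu, by
        rintro (e | e)
        · exact hux e
        · exact hyD (e ▸ hu)⟩
    have hsH : s ∈ H := hex x hxD y hyD hyd s hsV hsD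
    have hsg : s '' (g '' D) = insert x (g '' D \ {y}) := image_exchange hyg hs2 fun u hu huy =>
      hs3 u ⟨Or.inr hu, by
        rintro (e | e)
        · exact hxg (e ▸ hu)
        · exact huy e⟩
    have hcomp : (s * g) '' D = insert x (g '' D \ {y}) := by
      rw [← hsg, Set.image_image]
      rfl
    have hcard : ((s * g) '' D \ D).ncard = n := by
      have : (s * g) '' D \ D = (g '' D \ D) \ {y} := by
        rw [hcomp, Set.insert_sdiff_of_mem _ hxD, sdiff_right_comm]
      rw [this, Set.ncard_sdiff_singleton_of_mem (show y ∈ g '' D \ D from ⟨hyg, hyD⟩), hn]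
      rfl
    have hsgH := ih (s * g) (isSubgroupSet_VSet.2.1 _ hsV _ hg) hcard
    have := hH.2.1 _ (hH.2.2 _ hsH) _ hsgH
    rwa [inv_mul_cancel_left] at this

/-- The setwise stabilizer of a nonempty finite subset of Cantor space
whose elements all lie in the same tail class is a maximal subgroup of Thompson's
group `V`. -/
theorem stabilizer_of_finite_tail_class_isMaximal (D : Set Cantor)
    (hne : D.Nonempty) (hfin : D.Finite)
    (htail : ∀ u ∈ D, ∀ v ∈ D, TailEq u v) :
    IsMaximalSubgroupOfV (setStab D) := by
  obtain ⟨d, hd⟩ := hne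
  have hD : ∀ u ∈ D, TailEq u d := fun u hu => htail u hu d hd
  refine ⟨isSubgroupSet_setStab D, fun g hg => hg.1, ?_, ?_⟩
  · intro heq
    obtain ⟨z, hz, hzD⟩ := (infinite_tailClass d).exists_notMem_finite hfin
    have hz : TailEq z d := hz
    obtain ⟨t, htV, ht, -, -⟩ := exists_point_swap hz.symm Set.finite_empty (by simp) (by simp)
    rw [← heq] at htV
    have : t d ∈ D := htV.2 ▸ ⟨d, hd, rfl⟩
    exact hzD (ht ▸ this)
  · intro H hH hS hHV
    by_cases hHS : H = setStab D
    · exact Or.inl hHS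
    · right
      obtain ⟨k, hk, a, ha, b, hb, hbd, hkD⟩ := exists_exchange hfin hD hH hS hHV hHS
      refine Set.Subset.antisymm hHV fun g hg => ?_
      refine mem_of_exchange hfin hD hH hS ?_ _ g hg rfl
      intro x hx y hy hyd s hs hsD
      exact exchange_mem hfin hD hH hS hHV hk ha hb hbd hkD hx hy hyd hs hsD
end

section
/- The semigroup, under pointwise addition, of all continuous not-identically-zero functions from Cantor space 𝔠 to ℕ (ℕ given the discrete topology) is isomorphic to the additively written commutative semigroup with presentation having one generator x_α for each address α ∈ Ω and relations x_α = x_{α0} + x_{α1} for each α ∈ Ω, via the isomorphism sending x_α to the characteristic function χ_α of the cone α𝔠. -/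
/-- The characteristic function `χ_α : 𝔠 → ℕ` of the cone of `α`. -/
noncomputable def chi (α : Addr) : Cantor → ℕ := (cone α).indicator fun _ => 1

lemma mem_cone_iff (α : Addr) (w : Cantor) :
    w ∈ cone α ↔ ∀ i : Fin α.length, w i = α.get i := by
  constructor
  · rintro ⟨v, rfl⟩ i
    simp [wcat, i.isLt]
  · intro h
    refine ⟨fun n => w (n + α.length), ?_⟩
    funext n
    by_cases hn : n < α.length
    · simpa [wcat, hn] using (h ⟨n, hn⟩).symm
    · have hn' : n - α.length + α.length = n := by omega
      simp [wcat, hn, hn']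

lemma isClopen_cone (α : Addr) : IsClopen (cone α) := by
  have h : cone α = ⋂ i : Fin α.length, (fun w : Cantor => w i) ⁻¹' {α.get i} := by
    ext w
    simp [mem_cone_iff, Set.mem_iInter]
  constructor
  · rw [h]
    exact isClosed_iInter fun i =>
      (isClosed_discrete _).preimage (continuous_apply _)
  · rw [h]
    exact isOpen_iInter_of_finite fun i =>
      (isOpen_discrete _).preimage (continuous_apply _)

lemma continuous_chi (α : Addr) : Continuous (chi α) := by
  classical
  have h : chi α = (fun b : Bool => if b then 1 else 0) ∘ (cone α).boolIndicator := by
    funext w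
    by_cases hw : w ∈ cone α <;>
      simp [chi, Set.indicator, Set.boolIndicator, hw]
  rw [h]
  exact continuous_of_discreteTopology.comp
    ((continuous_boolIndicator_iff_isClopen _).2 (isClopen_cone α))

lemma chi_ne_zero (α : Addr) : chi α ≠ 0 := by
  intro h
  have hx : wcat α (fun _ => false) ∈ cone α := ⟨_, rfl⟩
  have h1 := congrFun h (wcat α (fun _ => false))
  rw [chi, Set.indicator_of_mem hx] at h1
  exact one_ne_zero h1

/-- The semigroup of continuous, not identically zero, functions `𝔠 → ℕ`
(under pointwise addition). -/
def CFn : Type := { f : Cantor → ℕ // Continuous f ∧ f ≠ 0 }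

noncomputable instance : Add CFn :=
  ⟨fun f g =>
    ⟨f.1 + g.1, f.2.1.add g.2.1, by
      intro h
      apply f.2.2
      funext x
      have hx := congrFun h x
      simp only [Pi.add_apply, Pi.zero_apply, Nat.add_eq_zero] at hx
      simpa using hx.1⟩⟩

/-- The characteristic function of the cone of `α`, as an element of the semigroup of
continuous nonzero functions `𝔠 → ℕ`. -/
noncomputable def chiS (α : Addr) : CFn := ⟨chi α, continuous_chi α, chi_ne_zero α⟩

/-! ### Cones and functions of finite depth -/

lemma mem_cone_append_singleton (α : Addr) (b : Bool) (w : Cantor) :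
    w ∈ cone (α ++ [b]) ↔ w ∈ cone α ∧ w α.length = b := by
  simp only [mem_cone_iff]
  constructor
  · intro h
    refine ⟨fun i => ?_, ?_⟩
    · have := h ⟨i, by grind⟩
      simpa [List.getElem_append, i.isLt] using this
    · simpa using h ⟨α.length, by simp⟩
  · rintro ⟨h, h'⟩ ⟨i, hi⟩
    by_cases hlt : i < α.length
    · simpa [List.getElem_append, hlt] using h ⟨i, hlt⟩
    · have : i = α.length := by simp at hi; omega
      subst this
      simpa using h'

lemma chi_of_mem {α : Addr} {w : Cantor} (h : w ∈ cone α) : chi α w = 1 := by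
  simp [chi, h]

lemma chi_of_notMem {α : Addr} {w : Cantor} (h : w ∉ cone α) : chi α w = 0 := by
  simp [chi, h]

lemma chi_split (α : Addr) : chi α = chi (α ++ [false]) + chi (α ++ [true]) := by
  classical
  funext w
  simp only [chi, Set.indicator_apply, Pi.add_apply, mem_cone_append_singleton]
  by_cases h : w ∈ cone α <;> cases hb : w α.length <;> simp [h]

/-- `HasDepth f k`: the value `f w` is determined by the first `k` letters of `w`. -/
def HasDepth (f : Cantor → ℕ) (k : ℕ) : Prop :=
  ∀ w w' : Cantor, (∀ i < k, w i = w' i) → f w = f w'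

lemma HasDepth.mono {f : Cantor → ℕ} {k l : ℕ} (h : HasDepth f k) (hkl : k ≤ l) :
    HasDepth f l :=
  fun w w' hw => h w w' fun i hi => hw i (hi.trans_le hkl)

lemma HasDepth.add {f g : Cantor → ℕ} {k : ℕ} (hf : HasDepth f k) (hg : HasDepth g k) :
    HasDepth (f + g) k := fun w w' hw => by
  simp [hf w w' hw, hg w w' hw]

lemma HasDepth.mul {f g : Cantor → ℕ} {k : ℕ} (hf : HasDepth f k) (hg : HasDepth g k) :
    HasDepth (f * g) k := fun w w' hw => by
  simp [hf w w' hw, hg w w' hw]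

lemma HasDepth.eq_on_cone {f : Cantor → ℕ} {α : Addr} (h : HasDepth f α.length)
    {w w' : Cantor} (hw : w ∈ cone α) (hw' : w' ∈ cone α) : f w = f w' := by
  rw [mem_cone_iff] at hw hw'
  exact h w w' fun i hi => (hw ⟨i, hi⟩).trans (hw' ⟨i, hi⟩).symm

lemma hasDepth_chi (α : Addr) : HasDepth (chi α) α.length := by
  classical
  intro w w' h
  have : w ∈ cone α ↔ w' ∈ cone α := by
    simp only [mem_cone_iff]
    exact forall_congr' fun i => by rw [h i i.isLt]
  simp [chi, Set.indicator_apply, this]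

/-- Compactness of Cantor space: a continuous `ℕ`-valued function has finite depth. -/
lemma exists_hasDepth {f : Cantor → ℕ} (hf : Continuous f) : ∃ k, HasDepth f k := by
  have local_depth : ∀ w : Cantor, ∃ n, ∀ w' : Cantor, (∀ i < n, w' i = w i) → f w' = f w := by
    intro w
    have ho : IsOpen (f ⁻¹' {f w}) := (isOpen_discrete _).preimage hf
    obtain ⟨I, u, hu, hsub⟩ := isOpen_pi_iff.1 ho w rfl
    refine ⟨I.sup Nat.succ, fun w' hw' => hsub fun i hi => ?_⟩
    have hlt : i < I.sup Nat.succ := Finset.le_sup (f := Nat.succ) hi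
    rw [hw' i hlt]
    exact (hu i hi).2
  choose n hn using local_depth
  have hnhds : ∀ w : Cantor, {w' : Cantor | ∀ i < n w, w' i = w i} ∈ nhds w := by
    intro w
    have : {w' : Cantor | ∀ i < n w, w' i = w i}
        = ⋂ i ∈ Set.Iio (n w), (fun w' : Cantor => w' i) ⁻¹' {w i} := by
      ext; simp
    rw [this]
    refine IsOpen.mem_nhds ?_ (by simp)
    exact (Set.finite_Iio _).isOpen_biInter fun i _ =>
      (isOpen_discrete _).preimage (continuous_apply i)
  obtain ⟨t, ht⟩ := CompactSpace.elim_nhds_subcover _ hnhds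
  refine ⟨t.sup n, fun w w' h => ?_⟩
  have hw : w ∈ (⊤ : Set Cantor) := trivial
  rw [← ht] at hw
  simp only [Set.mem_iUnion, Set.mem_ofPred_eq] at hw
  obtain ⟨v, hv, hwv⟩ := hw
  have hw' : ∀ i < n v, w' i = v i := fun i hi => by
    rw [← h i (hi.trans_le (Finset.le_sup hv)), hwv i hi]
  exact (hn v w hwv).trans (hn v w' hw').symm

/-! ### Cones generate -/

lemma CFn.val_add (f g : CFn) : (f + g).1 = f.1 + g.1 := rfl

/-- Induction over generators, for a function supported in the cone of `β` and of depth
`n` below `β`: a function of depth `0` below `β` is a multiple of `chi β`, and otherwise it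
splits along the two children of `β`. -/
lemma generate_aux (P : CFn → Prop) (hchi : ∀ α, P (chiS α))
    (hadd : ∀ f g, P f → P g → P (f + g)) (n : ℕ) :
    ∀ (β : Addr) (f : CFn), HasDepth f.1 (β.length + n) →
      (∀ w, w ∉ cone β → f.1 w = 0) → P f := by
  induction n with
  | zero =>
    intro β f hd hs
    have key : ∀ (c : ℕ) (g : CFn), g.1 = (fun w => (c + 1) * chi β w) → P g := by
      intro c
      induction c with
      | zero =>
        intro g hg
        have : g = chiS β := Subtype.ext (by rw [hg]; funext w; simp [chiS])
        exact this ▸ hchi β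
      | succ c ih =>
        intro g hg
        let g' : CFn := ⟨fun w => (c + 1) * chi β w, continuous_const.mul (continuous_chi β), by
          intro h
          apply chi_ne_zero β
          funext w
          simpa using congrFun h w⟩
        have : g = g' + chiS β := Subtype.ext (by
          rw [hg, CFn.val_add]; funext w; simp [chiS, g']; ring)
        exact this ▸ hadd _ _ (ih g' rfl) (hchi β)
    have hp : wcat β (fun _ => false) ∈ cone β := ⟨_, rfl⟩
    have hval : ∀ w, f.1 w = f.1 (wcat β fun _ => false) * chi β w := by
      intro w
      by_cases hw : w ∈ cone β
      · rw [chi_of_mem hw, mul_one]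
        exact HasDepth.eq_on_cone hd hw hp
      · rw [chi_of_notMem hw, mul_zero, hs w hw]
    have hc : f.1 (wcat β fun _ => false) ≠ 0 := by
      intro h0
      apply f.2.2
      funext w
      rw [hval w, h0, zero_mul]
      rfl
    obtain ⟨c, hc⟩ := Nat.exists_eq_succ_of_ne_zero hc
    exact key c f (by funext w; rw [hval w, hc])
  | succ n ih =>
    intro β f hd hs
    have hsum : f.1 = f.1 * chi (β ++ [false]) + f.1 * chi (β ++ [true]) := by
      rw [← mul_add, ← chi_split]
      funext w
      by_cases hw : w ∈ cone β
      · simp [chi_of_mem hw]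
      · simp [hs w hw]
    have part : ∀ (b : Bool) (g : CFn), g.1 = f.1 * chi (β ++ [b]) → P g := by
      intro b g hg
      refine ih (β ++ [b]) g ?_ ?_
      · rw [hg]
        refine HasDepth.mul (hd.mono ?_) ((hasDepth_chi _).mono ?_) <;> simp <;> omega
      · intro w hw
        simp [hg, chi_of_notMem hw]
    have hcont : ∀ b : Bool, Continuous (f.1 * chi (β ++ [b])) :=
      fun b => f.2.1.mul (continuous_chi _)
    -- The zero function is excluded from `CFn`, so a vanishing half has to be dropped.
    by_cases h0 : f.1 * chi (β ++ [false]) = 0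
    · exact part true f (by conv_lhs => rw [hsum, h0, zero_add])
    by_cases h1 : f.1 * chi (β ++ [true]) = 0
    · exact part false f (by conv_lhs => rw [hsum, h1, add_zero])
    let g₀ : CFn := ⟨_, hcont false, h0⟩
    let g₁ : CFn := ⟨_, hcont true, h1⟩
    have : f = g₀ + g₁ := Subtype.ext hsum
    rw [this]
    exact hadd _ _ (part false _ rfl) (part true _ rfl)

lemma generate (P : CFn → Prop) (hchi : ∀ α, P (chiS α))
    (hadd : ∀ f g, P f → P g → P (f + g)) (f : CFn) : P f := by
  obtain ⟨k, hk⟩ := exists_hasDepth f.2.1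
  refine generate_aux P hchi hadd k [] f (by simpa using hk) fun w hw => ?_
  exact absurd ((mem_cone_iff [] w).2 fun i => i.elim0) hw

/-! ### Level sums -/

section LevelSum

variable {M : Type} [AddCommMonoid M] (y : Addr → M)

/-- The sum of `f (γ000…) • y γ` over all words `γ` extending `α` by exactly `n` letters. -/
def levelSum : ℕ → Addr → (Cantor → ℕ) → M
  | 0, α, f => f (wcat α fun _ => false) • y α
  | n + 1, α, f => levelSum n (α ++ [false]) f + levelSum n (α ++ [true]) f

lemma levelSum_add (n : ℕ) (f g : Cantor → ℕ) :
    ∀ α, levelSum y n α (f + g) = levelSum y n α f + levelSum y n α g := by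
  induction n with
  | zero => intro α; simp [levelSum, add_nsmul]
  | succ n ih => intro α; simp only [levelSum, ih]; exact add_add_add_comm _ _ _ _

lemma levelSum_succ (hy : ∀ α, y α = y (α ++ [false]) + y (α ++ [true])) (n : ℕ)
    (f : Cantor → ℕ) :
    ∀ α : Addr, HasDepth f (α.length + n) → levelSum y (n + 1) α f = levelSum y n α f := by
  induction n with
  | zero =>
    intro α hf
    have h : ∀ b : Bool, f (wcat (α ++ [b]) fun _ => false) = f (wcat α fun _ => false) :=
      fun b => HasDepth.eq_on_cone hf
        ((mem_cone_append_singleton α b _).1 ⟨_, rfl⟩).1 ⟨_, rfl⟩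
    simp only [levelSum, h]
    rw [← nsmul_add, ← hy]
  | succ n ih =>
    intro α hf
    have h : ∀ b : Bool, levelSum y (n + 1) (α ++ [b]) f = levelSum y n (α ++ [b]) f :=
      fun b => ih _ (hf.mono (by simp; omega))
    rw [levelSum, h, h, levelSum]

lemma levelSum_stable (hy : ∀ α, y α = y (α ++ [false]) + y (α ++ [true])) {f : Cantor → ℕ}
    {n m : ℕ} (hf : HasDepth f n) (hnm : n ≤ m) : levelSum y m [] f = levelSum y n [] f := by
  induction m, hnm using Nat.le_induction with
  | base => rfl
  | succ m hm ih => rw [levelSum_succ y hy m f [] (hf.mono (by simpa using hm)), ih]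

lemma levelSum_eq_zero (n : ℕ) (f : Cantor → ℕ) :
    ∀ α : Addr, (∀ w ∈ cone α, f w = 0) → levelSum y n α f = 0 := by
  induction n with
  | zero => intro α h; simp [levelSum, h _ ⟨_, rfl⟩]
  | succ n ih =>
    intro α h
    have h' : ∀ b : Bool, levelSum y n (α ++ [b]) f = 0 := fun b =>
      ih _ fun w hw => h w ((mem_cone_append_singleton α b w).1 hw).1
    rw [levelSum, h', h', add_zero]

lemma mem_cone_of_append (γ : Addr) {w : Cantor} :
    ∀ α : Addr, w ∈ cone (α ++ γ) → w ∈ cone α := by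
  induction γ with
  | nil => intro α h; simpa using h
  | cons b γ ih =>
    intro α h
    rw [List.append_cons] at h
    exact ((mem_cone_append_singleton α b w).1 (ih _ h)).1

lemma levelSum_chi (γ : Addr) :
    ∀ α : Addr, levelSum y γ.length α (chi (α ++ γ)) = y (α ++ γ) := by
  induction γ with
  | nil => intro α; simp [levelSum, chi_of_mem (α := α) ⟨_, rfl⟩]
  | cons b γ ih =>
    intro α
    -- Only the child `α ++ [b]` meets the cone of `α ++ b :: γ`.
    have hz : ∀ c, c ≠ b → levelSum y γ.length (α ++ [c]) (chi (α ++ b :: γ)) = 0 := by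
      intro c hc
      refine levelSum_eq_zero y _ _ _ fun w hw => chi_of_notMem fun hw' => hc ?_
      rw [List.append_cons] at hw'
      rw [← ((mem_cone_append_singleton α c w).1 hw).2,
        ((mem_cone_append_singleton α b w).1 (mem_cone_of_append γ _ hw')).2]
    have hb : levelSum y γ.length (α ++ [b]) (chi (α ++ b :: γ)) = y (α ++ b :: γ) := by
      rw [List.append_cons α b γ]; exact ih _
    rw [List.length_cons, levelSum]
    cases b
    · rw [hb, hz true (by simp), add_zero]
    · rw [hb, hz false (by simp), zero_add]

end LevelSum

/-! ### Values of level sums in a semigroup with an adjoined zero -/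

lemma withZero_add_eq_zero {T : Type} [AddCommSemigroup T] {a b : WithZero T}
    (h : a + b = 0) : a = 0 ∧ b = 0 := by
  induction a using WithZero.recZeroCoe with
  | zero => exact ⟨rfl, by simpa using h⟩
  | coe a =>
    induction b using WithZero.recZeroCoe with
    | zero => exact absurd h (by simp)
    | coe b => exact absurd h (by rw [← WithZero.coe_add]; exact WithZero.coe_ne_zero)

/-- Level sums of generators from `T` below `α` reach the adjoined zero only for
functions vanishing on the cone of `α`. -/
lemma levelSum_ne_zero {T : Type} [AddCommSemigroup T] (y : Addr → T) (n : ℕ)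
    (f : Cantor → ℕ) : ∀ α : Addr, HasDepth f (α.length + n) →
      levelSum (fun α => (y α : WithZero T)) n α f = 0 → ∀ w ∈ cone α, f w = 0 := by
  induction n with
  | zero =>
    intro α hf h w hw
    have hp : f w = f (wcat α fun _ => false) := HasDepth.eq_on_cone hf hw ⟨_, rfl⟩
    rw [levelSum, ← hp] at h
    by_contra hne
    obtain ⟨c, hc⟩ := Nat.exists_eq_succ_of_ne_zero hne
    rw [hc, Nat.succ_eq_add_one, succ_nsmul] at h
    exact WithZero.coe_ne_zero (withZero_add_eq_zero h).2
  | succ n ih =>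
    intro α hf h w hw
    rw [levelSum] at h
    obtain ⟨h0, h1⟩ := withZero_add_eq_zero h
    have hd : ∀ b : Bool, HasDepth f ((α ++ [b]).length + n) :=
      fun b => hf.mono (by simp; omega)
    cases hb : w α.length
    · exact ih _ (hd _) h0 w ((mem_cone_append_singleton α _ w).2 ⟨hw, hb⟩)
    · exact ih _ (hd _) h1 w ((mem_cone_append_singleton α _ w).2 ⟨hw, hb⟩)

/-- The semigroup of continuous not-identically-zero functions
`𝔠 → ℕ` under pointwise addition is isomorphic, via `x_α ↦ χ_α`, to the commutative
semigroup with presentation `⟨ x_α (α ∈ Ω) ∣ x_α = x_{α0} + x_{α1} ⟩`: the elements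
`χ_α` satisfy the defining relations, and the pair `(CFn, χ)` enjoys the universal
property of that presentation (for every commutative semigroup `T` and every
assignment `y` of the generators satisfying the relations there is a unique additive
map extending it). -/
theorem semigroup_of_continuous_functions_presentation :
    (∀ α : Addr, chiS α = chiS (α ++ [false]) + chiS (α ++ [true])) ∧
    ∀ (T : Type) [AddCommSemigroup T] (y : Addr → T),
      (∀ α : Addr, y α = y (α ++ [false]) + y (α ++ [true])) →
      ∃! Φ : CFn → T,
        (∀ f g : CFn, Φ (f + g) = Φ f + Φ g) ∧ ∀ α : Addr, Φ (chiS α) = y α := by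
  refine ⟨fun α => Subtype.ext (chi_split α), fun T _ y hy => ?_⟩
  let z : Addr → WithZero T := fun α => (y α : WithZero T)
  have hz : ∀ α, z α = z (α ++ [false]) + z (α ++ [true]) := fun α => by
    simp only [z]
    rw [← WithZero.coe_add, ← hy]
  choose d hd using fun f : CFn => exists_hasDepth f.2.1
  have hne : ∀ f : CFn, ∃ t : T, (t : WithZero T) = levelSum z (d f) [] f.1 := fun f => by
    refine WithZero.ne_zero_iff_exists.1 fun h => f.2.2 ?_
    funext w
    exact levelSum_ne_zero y (d f) f.1 [] (by simpa using hd f) h w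
      ((mem_cone_iff [] w).2 fun i => i.elim0)
  choose Φ hΦ using hne
  have hΦ' : ∀ (f : CFn) (n : ℕ), HasDepth f.1 n →
      (Φ f : WithZero T) = levelSum z n [] f.1 := fun f n hn => by
    rw [hΦ, ← levelSum_stable z hz (hd f) (le_max_left _ n),
      levelSum_stable z hz hn (le_max_right _ _)]
  have hΦadd : ∀ f g : CFn, Φ (f + g) = Φ f + Φ g := fun f g => by
    have hf := (hd f).mono (le_max_left _ (d g))
    have hg := (hd g).mono (le_max_right (d f) _)
    apply WithZero.coe_injective
    rw [WithZero.coe_add, hΦ' f _ hf, hΦ' g _ hg, hΦ' (f + g) _ (hf.add hg), CFn.val_add,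
      levelSum_add]
  have hΦchi : ∀ α, Φ (chiS α) = y α := fun α => by
    apply WithZero.coe_injective
    rw [hΦ' (chiS α) _ (hasDepth_chi α)]
    exact levelSum_chi z α []
  refine ⟨Φ, ⟨hΦadd, hΦchi⟩, ?_⟩
  rintro Ψ ⟨hadd, hchi⟩
  funext f
  exact generate (fun f => Ψ f = Φ f) (fun α => (hchi α).trans (hΦchi α).symm)
    (fun f g hf hg => by rw [hadd, hΦadd, hf, hg]) f
end

section
/- Let 𝒫 be a multinuclear type system on Ω with nuclei 𝒬⁽¹⁾,…,𝒬⁽ᵏ⁾. Then for each i the subsemigroup Gᵢ of S(𝒫) generated by the generators corresponding to the types in 𝒬⁽ⁱ⁾ has the structure of a group; in particular, if 𝒫 is nuclear (k = 1), then S(𝒫) itself is a group. -/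
/-- A relation on addresses is coherent if `α ∼ β` implies `α0 ∼ β0` and `α1 ∼ β1`. -/
def Coherent (r : Addr → Addr → Prop) : Prop :=
  ∀ α β, r α β → r (α ++ [false]) (β ++ [false]) ∧ r (α ++ [true]) (β ++ [true])

/-- A relation on addresses is reduced if `α0 ∼ β0` and `α1 ∼ β1` imply `α ∼ β`. -/
def Reduced (r : Addr → Addr → Prop) : Prop :=
  ∀ α β, r (α ++ [false]) (β ++ [false]) → r (α ++ [true]) (β ++ [true]) → r α β

/-- A type system: a coherent and reduced equivalence relation on addresses
(identified with the partition of `Ω` into its classes). -/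
def IsTypeSystem (r : Addr → Addr → Prop) : Prop :=
  Equivalence r ∧ Coherent r ∧ Reduced r

/-- `g` fixes the parts of `r`: for all but finitely many addresses `α`, the image
`α ^ g` is defined and equivalent to `α`. -/
def FixesParts (r : Addr → Addr → Prop) (g : Equiv.Perm Cantor) : Prop :=
  { α : Addr | ¬ ∃ β, actsOn g α β ∧ r α β }.Finite

/-- `g` stabilizes `r`: on some cofinite set of addresses, `α ^ g` is defined and `g`
preserves equivalence and inequivalence of addresses. -/
def Stabilizes (r : Addr → Addr → Prop) (g : Equiv.Perm Cantor) : Prop :=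
  ∃ Ω₀ : Set Addr, Ω₀ᶜ.Finite ∧ (∀ α ∈ Ω₀, ∃ β, actsOn g α β) ∧
    ∀ α ∈ Ω₀, ∀ α' ∈ Ω₀, ∀ β β', actsOn g α β → actsOn g α' β' → (r α α' ↔ r β β')

/-- `Fix_V(𝒫)`: the elements of Thompson's group `V` fixing the parts of `r`. -/
def FixSet (r : Addr → Addr → Prop) : Set (Equiv.Perm Cantor) :=
  { g | IsPrefixSubst g ∧ FixesParts r g }

/-- `Stab_V(𝒫)`: the elements of Thompson's group `V` stabilizing `r`. -/
def StabSet (r : Addr → Addr → Prop) : Set (Equiv.Perm Cantor) :=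
  { g | IsPrefixSubst g ∧ Stabilizes r g }

/-- The type system of `s` is a quotient of that of `r`. -/
def IsQuotientOf (s r : Addr → Addr → Prop) : Prop :=
  IsTypeSystem s ∧ ∀ α β, r α β → s α β

/-- A simple type system: the universal relation is a proper quotient, and every
quotient is either the type system itself or the universal one. -/
def SimpleTS (r : Addr → Addr → Prop) : Prop :=
  IsTypeSystem r ∧ (∃ α β : Addr, ¬ r α β) ∧
    ∀ s : Addr → Addr → Prop, IsQuotientOf s r →
      (∀ α β, s α β ↔ r α β) ∨ ∀ α β, s α β

/-- The type (equivalence class) of the address `α`. -/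
def typeOf (r : Addr → Addr → Prop) (α : Addr) : Set Addr := { β | r α β }

/-- `S` is a union of `r`-classes, i.e. a set of types of the type system. -/
def Saturated (r : Addr → Addr → Prop) (S : Set Addr) : Prop :=
  ∀ α ∈ S, ∀ β, r α β → β ∈ S

/-- `S` is child-closed: with each address (type) it contains both of its children. -/
def ChildClosed (S : Set Addr) : Prop :=
  ∀ α ∈ S, α ++ [false] ∈ S ∧ α ++ [true] ∈ S

/-- The word `γ` determines a path through `S` from (the type of) `α`. -/
def PathThrough (S : Set Addr) (α γ : Addr) : Prop :=
  ∀ ζ : Addr, ζ <+: γ → α ++ ζ ∈ S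

/-- `S` is strongly connected. -/
def StronglyConnected (r : Addr → Addr → Prop) (S : Set Addr) : Prop :=
  ∀ α ∈ S, ∀ β ∈ S, ∃ γ : Addr, γ ≠ [] ∧ PathThrough S α γ ∧ r (α ++ γ) β

/-- A nucleus: a (nonempty) child-closed and strongly connected set of types. -/
def IsNucleus (r : Addr → Addr → Prop) (S : Set Addr) : Prop :=
  S.Nonempty ∧ Saturated r S ∧ ChildClosed S ∧ StronglyConnected r S

/-- `S` consists of exactly one type. -/
def IsSingleType (r : Addr → Addr → Prop) (S : Set Addr) : Prop :=
  ∃ α : Addr, S = typeOf r α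

/-- A multinuclear type system: finitely many pairwise disjoint nuclei containing the
types of all sufficiently long addresses. -/
def Multinuclear (r : Addr → Addr → Prop) : Prop :=
  ∃ (k : ℕ) (Q : Fin k → Set Addr), 0 < k ∧ (∀ i, IsNucleus r (Q i)) ∧
    (∀ i j, i ≠ j → Disjoint (Q i) (Q j)) ∧
    ∃ t : ℕ, 0 < t ∧ ∀ α : Addr, t ≤ α.length → ∃ i, α ∈ Q i

/-- A nuclear type system: a single nucleus containing the types of all sufficiently
long addresses. -/
def Nuclear (r : Addr → Addr → Prop) : Prop :=
  ∃ Q : Set Addr, IsNucleus r Q ∧ ∃ t : ℕ, 0 < t ∧ ∀ α : Addr, t ≤ α.length → α ∈ Q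

/-- An atomic binuclear type system: two disjoint singleton nuclei containing the types
of all sufficiently long addresses. -/
def AtomicBinuclear (r : Addr → Addr → Prop) : Prop :=
  ∃ Q₁ Q₂ : Set Addr, IsNucleus r Q₁ ∧ IsNucleus r Q₂ ∧ Disjoint Q₁ Q₂ ∧
    IsSingleType r Q₁ ∧ IsSingleType r Q₂ ∧
    ∃ t : ℕ, 0 < t ∧ ∀ α : Addr, t ≤ α.length → α ∈ Q₁ ∪ Q₂

/-- The data `(𝒬, ℛ)` witnessing that a type system is quasinuclear. -/
def QuasinuclearData (r : Addr → Addr → Prop) (Q R : Set Addr) : Prop :=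
  Q.Nonempty ∧ R.Nonempty ∧ Saturated r Q ∧ Saturated r R ∧ Disjoint Q R ∧
    (∃ t : ℕ, 0 < t ∧ ∀ α : Addr, t ≤ α.length → α ∈ Q ∪ R) ∧
    IsNucleus r R ∧ StronglyConnected r Q ∧ ChildClosed (Q ∪ R) ∧
    ∀ α ∈ Q, ∀ β ∈ R, ∃ γ : Addr, r (α ++ γ) β

/-- A quasinuclear type system. -/
def Quasinuclear (r : Addr → Addr → Prop) : Prop :=
  ∃ Q R : Set Addr, QuasinuclearData r Q R

/-- `𝒬†`: the types of `𝒬` both of whose children lie in `𝒬`. -/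
def QDagger (Q : Set Addr) : Set Addr :=
  { α ∈ Q | α ++ [false] ∈ Q ∧ α ++ [true] ∈ Q }

/-- An atomic quasinuclear type system: the nucleus `ℛ` is a single type. -/
def AtomicQuasinuclear (r : Addr → Addr → Prop) : Prop :=
  ∃ Q R : Set Addr, QuasinuclearData r Q R ∧ IsSingleType r R

/-- The defining relations of the semigroup `S(𝒫)`, with one generator for each
address (generators of equivalent addresses being identified): `x_α = x_{α0} + x_{α1}`
and `x_α = x_β` whenever `α ∼ β`.  Sums of generators are encoded as multisets. -/
def stypeRel (r : Addr → Addr → Prop) : Multiset Addr → Multiset Addr → Prop :=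
  fun x y =>
    (∃ α : Addr, x = {α} ∧ y = {α ++ [false], α ++ [true]}) ∨
    (∃ α β : Addr, r α β ∧ x = {α} ∧ y = {β})

/-- The congruence presenting the semigroup `S(𝒫)`. -/
def stypeCon (r : Addr → Addr → Prop) : AddCon (Multiset Addr) :=
  addConGen (stypeRel r)

/-- The multiset `m` encodes a decomposition of `U` into pairwise disjoint cones. -/
def Decomp (U : Set Cantor) (m : Multiset Addr) : Prop :=
  Multiset.Pairwise (fun a b => Disjoint (cone a) (cone b)) m ∧
    U = { w : Cantor | ∃ a ∈ m, w ∈ cone a }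

/-- `U` and `U'` have the same s-type: some (equivalently, any) decompositions of `U`
and `U'` into disjoint cones have identified images in `S(𝒫)`. -/
def SameSType (r : Addr → Addr → Prop) (U U' : Set Cantor) : Prop :=
  ∃ m m' : Multiset Addr, m ≠ 0 ∧ m' ≠ 0 ∧ Decomp U m ∧ Decomp U' m' ∧ stypeCon r m m'

/-- The image in `S(𝒫)` of the nonzero multisets supported on `S` : the subsemigroup
generated by the generators corresponding to the types in `S`. -/
def subSemigroupOn (r : Addr → Addr → Prop) (S : Set Addr) :
    Set (stypeCon r).Quotient :=
  { x | ∃ m : Multiset Addr, m ≠ 0 ∧ (∀ α ∈ m, α ∈ S) ∧ x = (stypeCon r).mk' m }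

/-- The semigroup `S(𝒫)` inside the presented monoid: images of nonzero multisets. -/
def wholeSemigroup (r : Addr → Addr → Prop) : Set (stypeCon r).Quotient :=
  { x | ∃ m : Multiset Addr, m ≠ 0 ∧ x = (stypeCon r).mk' m }

/-- A nonempty subset of a commutative monoid in which all equations `x + y = w` are solvable has
an identity element and inverses. -/
theorem group_of_divisible {M : Type*} [AddCommMonoid M] (G : Set M) (hne : G.Nonempty)
    (hdiv : ∀ x ∈ G, ∀ w ∈ G, ∃ y ∈ G, x + y = w) :
    ∃ e ∈ G, (∀ x ∈ G, x + e = x) ∧ ∀ x ∈ G, ∃ y ∈ G, x + y = e := by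
  obtain ⟨a, ha⟩ := hne
  obtain ⟨e, he, hae⟩ := hdiv a ha a ha
  refine ⟨e, he, fun x hx => ?_, fun x hx => hdiv x hx e he⟩
  obtain ⟨y, -, rfl⟩ := hdiv a ha x hx
  rw [add_right_comm, hae]

/-- The generator of `S(𝒫)` corresponding to the type of the address `α`. -/
def gen (r : Addr → Addr → Prop) (α : Addr) : (stypeCon r).Quotient :=
  (stypeCon r).mk' {α}

theorem gen_eq_of_rel {r : Addr → Addr → Prop} {α β : Addr} (h : r α β) :
    gen r α = gen r β :=
  (AddCon.eq _).2 (AddConGen.Rel.of _ _ (Or.inr ⟨α, β, h, rfl, rfl⟩))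

theorem gen_eq_add_children (r : Addr → Addr → Prop) (α : Addr) :
    gen r α = gen r (α ++ [false]) + gen r (α ++ [true]) := by
  have h : gen r α = (stypeCon r).mk' {α ++ [false], α ++ [true]} :=
    (AddCon.eq _).2 (AddConGen.Rel.of _ _ (Or.inl ⟨α, rfl, rfl⟩))
  rw [h, gen, gen, ← map_add]
  rfl

theorem mk'_cons (r : Addr → Addr → Prop) (α : Addr) (m : Multiset Addr) :
    (stypeCon r).mk' (α ::ₘ m) = gen r α + (stypeCon r).mk' m := by
  rw [gen, ← map_add, Multiset.singleton_add]

theorem gen_mem {r : Addr → Addr → Prop} {S : Set Addr} {α : Addr} (h : α ∈ S) :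
    gen r α ∈ subSemigroupOn r S :=
  ⟨{α}, by simp, by simpa using h, rfl⟩

/-- Adding a possibly empty sum of generators of `S` stays in the subsemigroup. -/
theorem add_mk'_mem {r : Addr → Addr → Prop} {S : Set Addr} {x : (stypeCon r).Quotient}
    (hx : x ∈ subSemigroupOn r S) {m : Multiset Addr} (hm : ∀ α ∈ m, α ∈ S) :
    x + (stypeCon r).mk' m ∈ subSemigroupOn r S := by
  obtain ⟨n, hn, hnS, rfl⟩ := hx
  refine ⟨n + m, by simp [hn], fun α hα => ?_, by rw [map_add]⟩
  rcases Multiset.mem_add.1 hα with h | h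
  exacts [hnS α h, hm α h]

theorem add_mem_subSemigroupOn {r : Addr → Addr → Prop} {S : Set Addr}
    {x y : (stypeCon r).Quotient}
    (hx : x ∈ subSemigroupOn r S) (hy : y ∈ subSemigroupOn r S) :
    x + y ∈ subSemigroupOn r S := by
  obtain ⟨n, -, hnS, rfl⟩ := hy
  exact add_mk'_mem hx hnS

/-- Splitting `α` along a nonempty word `γ` leaves the generator of `αγ` plus the generators of
the siblings met on the way. -/
theorem exists_gen_eq_gen_append_add {r : Addr → Addr → Prop} {S : Set Addr}
    (hS : ChildClosed S) (γ : Addr) (hγ : γ ≠ []) (α : Addr) (hα : α ∈ S) :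
    ∃ z ∈ subSemigroupOn r S, gen r α = gen r (α ++ γ) + z := by
  induction γ generalizing α with
  | nil => exact absurd rfl hγ
  | cons b γ ih =>
    obtain ⟨h0, h1⟩ := hS α hα
    obtain ⟨z, hz, hbz, hb⟩ : ∃ z ∈ subSemigroupOn r S,
        gen r α = gen r (α ++ [b]) + z ∧ α ++ [b] ∈ S := by
      cases b with
      | false => exact ⟨_, gen_mem h1, gen_eq_add_children r α, h0⟩
      | true => exact ⟨_, gen_mem h0, by rw [gen_eq_add_children r α, add_comm], h1⟩
    by_cases hne : γ = []
    · subst hne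
      exact ⟨z, hz, hbz⟩
    · obtain ⟨z', hz', h'⟩ := ih hne _ hb
      refine ⟨z' + z, add_mem_subSemigroupOn hz' hz, ?_⟩
      rw [hbz, h', add_assoc, List.append_assoc, List.singleton_append]

theorem exists_gen_eq_gen_add {r : Addr → Addr → Prop} {S : Set Addr} (hS : IsNucleus r S)
    {α β : Addr} (hα : α ∈ S) (hβ : β ∈ S) :
    ∃ z ∈ subSemigroupOn r S, gen r α = gen r β + z := by
  obtain ⟨-, -, hcc, hsc⟩ := hS
  obtain ⟨γ, hγ, -, hr⟩ := hsc α hα β hβ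
  obtain ⟨z, hz, h⟩ := exists_gen_eq_gen_append_add (r := r) hcc γ hγ α hα
  exact ⟨z, hz, by rw [h, gen_eq_of_rel hr]⟩

/-- Any sum of generators of a nucleus can be split off any generator of that nucleus, with a
nonempty remainder. -/
theorem exists_gen_eq_mk'_add {r : Addr → Addr → Prop} {S : Set Addr} (hS : IsNucleus r S)
    (m : Multiset Addr) (hm : ∀ β ∈ m, β ∈ S) (α : Addr) (hα : α ∈ S) :
    ∃ z ∈ subSemigroupOn r S, gen r α = (stypeCon r).mk' m + z := by
  induction m using Multiset.induction generalizing α with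
  | empty => exact ⟨_, gen_mem hα, by rw [map_zero, zero_add]⟩
  | cons β m ih =>
    obtain ⟨z, ⟨n, hn, hnS, rfl⟩, hz⟩ :=
      exists_gen_eq_gen_add hS hα (hm β (Multiset.mem_cons_self β m))
    -- The nonempty remainder contains some generator `δ`, from which `m` is split off.
    obtain ⟨δ, hδ⟩ := Multiset.exists_mem_of_ne_zero hn
    obtain ⟨n, rfl⟩ := Multiset.exists_cons_of_mem hδ
    obtain ⟨y, hy, hδy⟩ := ih (fun b hb => hm b (Multiset.mem_cons_of_mem hb)) δ (hnS δ hδ)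
    refine ⟨y + (stypeCon r).mk' n,
      add_mk'_mem hy fun b hb => hnS b (Multiset.mem_cons_of_mem hb), ?_⟩
    rw [hz, mk'_cons, mk'_cons, hδy]
    simp only [add_assoc]

theorem exists_add_eq {r : Addr → Addr → Prop} {S : Set Addr} (hS : IsNucleus r S)
    (x : (stypeCon r).Quotient) (hx : x ∈ subSemigroupOn r S)
    (w : (stypeCon r).Quotient) (hw : w ∈ subSemigroupOn r S) :
    ∃ y ∈ subSemigroupOn r S, x + y = w := by
  obtain ⟨m, -, hmS, rfl⟩ := hx
  obtain ⟨n, hn, hnS, rfl⟩ := hw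
  obtain ⟨δ, hδ⟩ := Multiset.exists_mem_of_ne_zero hn
  obtain ⟨n, rfl⟩ := Multiset.exists_cons_of_mem hδ
  obtain ⟨y, hy, hδy⟩ := exists_gen_eq_mk'_add hS m hmS δ (hnS δ hδ)
  refine ⟨y + (stypeCon r).mk' n,
    add_mk'_mem hy fun b hb => hnS b (Multiset.mem_cons_of_mem hb), ?_⟩
  rw [mk'_cons, hδy, add_assoc]

/-- If `S` contains all addresses of length at least `t`, every generator is a sum of generators
of `S`; here `d` bounds the number of levels by which `α` still has to be split. -/
theorem gen_mem_of_cover {r : Addr → Addr → Prop} {S : Set Addr} {t : ℕ}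
    (hcover : ∀ α : Addr, t ≤ α.length → α ∈ S) (d : ℕ) (α : Addr) (hd : t ≤ α.length + d) :
    gen r α ∈ subSemigroupOn r S := by
  induction d generalizing α with
  | zero => exact gen_mem (hcover α hd)
  | succ d ih =>
    rw [gen_eq_add_children]
    exact add_mem_subSemigroupOn (ih _ (by simp; omega)) (ih _ (by simp; omega))

theorem wholeSemigroup_eq_subSemigroupOn {r : Addr → Addr → Prop} {S : Set Addr} {t : ℕ}
    (hcover : ∀ α : Addr, t ≤ α.length → α ∈ S) :
    wholeSemigroup r = subSemigroupOn r S := by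
  refine Set.Subset.antisymm ?_ ?_
  · rintro _ ⟨m, hm, rfl⟩
    induction m using Multiset.induction with
    | empty => exact absurd rfl hm
    | cons α m ih =>
      have hα : gen r α ∈ subSemigroupOn r S :=
        gen_mem_of_cover hcover t α (Nat.le_add_left _ _)
      rw [mk'_cons]
      by_cases h : m = 0
      · rwa [h, map_zero, add_zero]
      · exact add_mem_subSemigroupOn hα (ih h)
  · rintro _ ⟨m, hm, -, rfl⟩
    exact ⟨m, hm, rfl⟩

/-- For a multinuclear type system with nuclei `𝒬⁽¹⁾, …, 𝒬⁽ᵏ⁾`, each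
subsemigroup `Gᵢ` of `S(𝒫)` generated by the generators corresponding to the types of
`𝒬⁽ⁱ⁾` has the structure of a group; in particular, if `𝒫` is nuclear (`k = 1`) then
`S(𝒫)` itself is a group. -/
theorem nucleus_subsemigroup_isGroup (r : Addr → Addr → Prop) (hr : IsTypeSystem r)
    (k : ℕ) (hk : 0 < k) (Q : Fin k → Set Addr)
    (hnuc : ∀ i, IsNucleus r (Q i))
    (hdisj : ∀ i j, i ≠ j → Disjoint (Q i) (Q j))
    (t : ℕ) (ht : 0 < t) (hcover : ∀ α : Addr, t ≤ α.length → ∃ i, α ∈ Q i) :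
    (∀ i, ∃ e ∈ subSemigroupOn r (Q i),
      (∀ x ∈ subSemigroupOn r (Q i), x + e = x) ∧
      ∀ x ∈ subSemigroupOn r (Q i), ∃ y ∈ subSemigroupOn r (Q i), x + y = e) ∧
    (k = 1 → ∃ e ∈ wholeSemigroup r,
      (∀ x ∈ wholeSemigroup r, x + e = x) ∧
      ∀ x ∈ wholeSemigroup r, ∃ y ∈ wholeSemigroup r, x + y = e) := by
  have hgroup (i : Fin k) : ∃ e ∈ subSemigroupOn r (Q i),
      (∀ x ∈ subSemigroupOn r (Q i), x + e = x) ∧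
      ∀ x ∈ subSemigroupOn r (Q i), ∃ y ∈ subSemigroupOn r (Q i), x + y = e := by
    obtain ⟨α, hα⟩ := (hnuc i).1
    exact group_of_divisible _ ⟨_, gen_mem hα⟩ (exists_add_eq (hnuc i))
  refine ⟨hgroup, ?_⟩
  rintro rfl
  have hcover' : ∀ α : Addr, t ≤ α.length → α ∈ Q 0 := fun α hα => by
    obtain ⟨i, hi⟩ := hcover α hα
    rwa [Subsingleton.elim i 0] at hi
  rw [wholeSemigroup_eq_subSemigroupOn hcover']
  exact hgroup 0
end

section
/- Let 𝒫 be a simple type system on Ω. If 𝒮 is a nonempty child-closed subset of 𝒫 such that the complement 𝒫 \ 𝒮 contains a cycle, then 𝒮 consists of exactly one type. -/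
/-- The reduced relation generated by collapsing `S` to one class: `α` and `β` are related if
`αζ` and `βζ` are `r`-equivalent or both in `S`, for all words `ζ` of length at least some `n`. -/
def collapse (r : Addr → Addr → Prop) (S : Set Addr) (α β : Addr) : Prop :=
  ∃ n : ℕ, ∀ ζ : Addr, n ≤ ζ.length → r (α ++ ζ) (β ++ ζ) ∨ (α ++ ζ ∈ S ∧ β ++ ζ ∈ S)

theorem Coherent.append {r : Addr → Addr → Prop} (h : Coherent r) (ζ : Addr) :
    ∀ α β, r α β → r (α ++ ζ) (β ++ ζ) := by
  induction ζ with
  | nil => intro α β hab; simpa using hab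
  | cons b ζ ih =>
    intro α β hab
    have h1 : r (α ++ [b]) (β ++ [b]) := by
      cases b
      · exact (h α β hab).1
      · exact (h α β hab).2
    simpa using ih _ _ h1

theorem ChildClosed.append {S : Set Addr} (h : ChildClosed S) (ζ : Addr) :
    ∀ α ∈ S, α ++ ζ ∈ S := by
  induction ζ with
  | nil => intro α ha; simpa using ha
  | cons b ζ ih =>
    intro α ha
    have h1 : α ++ [b] ∈ S := by
      cases b
      · exact (h α ha).1
      · exact (h α ha).2
    simpa using ih _ h1

theorem collapse_isTypeSystem {r : Addr → Addr → Prop} {S : Set Addr} (hr : Equivalence r)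
    (hsat : Saturated r S) : IsTypeSystem (collapse r S) := by
  refine ⟨⟨fun α => ⟨0, fun ζ _ => Or.inl (hr.refl _)⟩, ?_, ?_⟩, ?_, ?_⟩
  · rintro α β ⟨n, h⟩
    exact ⟨n, fun ζ hζ => (h ζ hζ).imp hr.symm And.symm⟩
  · rintro α β δ ⟨n, h⟩ ⟨m, k⟩
    refine ⟨max n m, fun ζ hζ => ?_⟩
    rcases h ζ (le_trans (le_max_left _ _) hζ) with h1 | h1 <;>
      rcases k ζ (le_trans (le_max_right _ _) hζ) with k1 | k1
    · exact Or.inl (hr.trans h1 k1)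
    · exact Or.inr ⟨hsat _ k1.1 _ (hr.symm h1), k1.2⟩
    · exact Or.inr ⟨h1.1, hsat _ h1.2 _ k1⟩
    · exact Or.inr ⟨h1.1, k1.2⟩
  · rintro α β ⟨n, h⟩
    have key : ∀ b : Bool, collapse r S (α ++ [b]) (β ++ [b]) := fun b =>
      ⟨n, fun ζ hζ => by simpa using h (b :: ζ) (by simp; omega)⟩
    exact ⟨key false, key true⟩
  · rintro α β ⟨n, h⟩ ⟨m, k⟩
    refine ⟨max n m + 1, fun ζ hζ => ?_⟩
    cases ζ with
    | nil => simp at hζ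
    | cons b ζ =>
      have hl : max n m ≤ ζ.length := by simpa using hζ
      cases b
      · simpa using h ζ (le_trans (le_max_left _ _) hl)
      · simpa using k ζ (le_trans (le_max_right _ _) hl)

/-- Going around a cycle any number of times returns to the same type, so there are arbitrarily
long words leading from the base of the cycle back to its own type. -/
theorem exists_long_cycle {r : Addr → Addr → Prop} (hr : Equivalence r) (hc : Coherent r)
    {α γ : Addr} (hγ : γ ≠ []) (h : r (α ++ γ) α) (n : ℕ) :
    ∃ ζ : Addr, n ≤ ζ.length ∧ r (α ++ ζ) α := by
  induction n with
  | zero => exact ⟨[], by simp, by simpa using hr.refl α⟩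
  | succ n ih =>
    obtain ⟨ζ, hl, hζ⟩ := ih
    have hpos := List.length_pos_of_ne_nil hγ
    refine ⟨γ ++ ζ, by simp; omega, ?_⟩
    have := hr.trans (hc.append ζ _ _ h) hζ
    simpa using this

/-- In a simple type system, a nonempty child-closed set of types
whose complement contains a cycle consists of exactly one type. -/
theorem childClosed_with_cycle_in_complement_isSingleType
    (r : Addr → Addr → Prop) (hr : SimpleTS r)
    (S : Set Addr) (hne : S.Nonempty) (hsat : Saturated r S) (hcc : ChildClosed S)
    (hcyc : ∃ α : Addr, α ∉ S ∧
      ∃ γ : Addr, γ ≠ [] ∧ PathThrough Sᶜ α γ ∧ r (α ++ γ) α) :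
    IsSingleType r S := by
  obtain ⟨⟨heq, hcoh, -⟩, -, hsimple⟩ := hr
  obtain ⟨β, hβ⟩ := hne
  obtain ⟨α, hα, γ, hγ, -, hαγ⟩ := hcyc
  rcases hsimple (collapse r S) ⟨collapse_isTypeSystem heq hsat,
    fun a b hab => ⟨0, fun ζ _ => Or.inl (hcoh.append ζ a b hab)⟩⟩ with h | h
  · refine ⟨β, Set.ext fun δ => ⟨fun hδ => ?_, fun hδ => hsat β hβ δ hδ⟩⟩
    exact (h β δ).1 ⟨0, fun ζ _ => Or.inr ⟨hcc.append ζ β hβ, hcc.append ζ δ hδ⟩⟩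
  · obtain ⟨n, hn⟩ := h α β
    obtain ⟨ζ, hl, hζ⟩ := exists_long_cycle heq hcoh hγ hαγ n
    have hmem : α ++ ζ ∈ S := by
      rcases hn ζ hl with h1 | h1
      · exact hsat _ (hcc.append ζ β hβ) _ (heq.symm h1)
      · exact h1.1
    exact absurd (hsat _ hmem _ hζ) hα
end
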